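/- (Theorem 3, conditional mass of the vacuous focal element in the Simplex-DSM.) Let K ≥ 2 and let Z_1, …, Z_K be i.i.d. Exp(1) random variables. Then for every p ∈ (0,1), P( min_{2 ≤ j ≤ K} Z_j ≥ ((1 − p)/p) · Z_1 | Z_1/(Z_1 + ⋯ + Z_K) ≤ p ) = 1 / ( (1 + (K − 2)(1 − p)) · (1 + Σ_{i=1}^{K−2} (1 − p)^i) ). -/

import Mathlib

/-!
An `Exp(r)` variable `X` independent of `Y ≥ 0` satisfies `P(X ≤ Y) = 1 - E[exp(-rY)]`. With
`c = p / (1 - p)`, the conditioning event is almost surely `Z k ≤ c * ∑ j ≠ k, Z j`, and the other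
event is `Z k ≤ c * min j ≠ k, Z j`, which almost surely implies it. So the conditional probability
is a quotient of two such probabilities: the Laplace transform of the sum is a product by
independence, and the minimum is again exponential, with the sum of the rates as its rate.
-/

open MeasureTheory ProbabilityTheory

section ExpMeasure

variable {r : ℝ}

lemma expMeasure_eq_withDensity (r : ℝ) :
    expMeasure r = volume.withDensity (exponentialPDF r) := rfl

lemma expMeasure_Iic_zero (hr : 0 < r) : expMeasure r (Set.Iic 0) = 0 := by
  have := isProbabilityMeasure_expMeasure hr
  simp [← ofReal_cdf, cdf_expMeasure_eq hr]

lemma expMeasure_Ici (hr : 0 < r) (t : ℝ) :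
    expMeasure r (Set.Ici t) = ENNReal.ofReal (Real.exp (-(r * max t 0))) := by
  have := isProbabilityMeasure_expMeasure hr
  have : NullSingletonClass (expMeasure r) := expMeasure_eq_withDensity r ▸ inferInstance
  rw [← measure_congr Ioi_ae_eq_Ici, ← Set.compl_Iic, prob_compl_eq_one_sub measurableSet_Iic,
    ← ofReal_cdf, cdf_expMeasure_eq hr, ← ENNReal.ofReal_one,
    ← ENNReal.ofReal_sub _ (cdf_expMeasure_eq hr t ▸ cdf_nonneg _ _)]
  split_ifs with ht
  · simp [ht]
  · simp [(not_le.1 ht).le]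

lemma integral_exponentialPDFReal (hr : 0 < r) : ∫ x, exponentialPDFReal r x = 1 := by
  rw [integral_eq_lintegral_of_nonneg_ae (.of_forall (exponentialPDFReal_nonneg hr))
    (by fun_prop)]
  exact congrArg ENNReal.toReal (lintegral_exponentialPDF_eq_one hr)

lemma exponentialPDFReal_mul_exp {t : ℝ} (ht : t ≠ r) (x : ℝ) :
    exponentialPDFReal r x * Real.exp (t * x) = r / (r - t) * exponentialPDFReal (r - t) x := by
  have hrt : r - t ≠ 0 := sub_ne_zero.2 ht.symm
  rcases lt_or_ge x 0 with hx | hx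
  · simp [exponentialPDFReal, gammaPDFReal, hx.not_ge]
  · simp only [exponentialPDFReal, gammaPDFReal, if_pos hx, Real.Gamma_one, Real.rpow_one, sub_self,
      Real.rpow_zero, div_one, mul_one]
    rw [mul_assoc, ← Real.exp_add, ← mul_assoc, div_mul_cancel₀ _ hrt]
    ring_nf

lemma mgf_id_expMeasure (hr : 0 < r) {t : ℝ} (ht : t < r) :
    mgf id (expMeasure r) t = r / (r - t) := by
  have hrt : 0 < r - t := sub_pos.2 ht
  have hpdf : Measurable (exponentialPDF r) := (measurable_exponentialPDFReal r).ennreal_ofReal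
  calc mgf id (expMeasure r) t
      = ∫ x, exponentialPDFReal r x * Real.exp (t * x) := by
        rw [mgf, expMeasure_eq_withDensity, integral_withDensity_eq_integral_toReal_smul hpdf
          (.of_forall fun _ ↦ ENNReal.ofReal_lt_top)]
        simp only [exponentialPDF, ENNReal.toReal_ofReal (exponentialPDFReal_nonneg hr _),
          smul_eq_mul, id]
    _ = r / (r - t) := by
        simp only [exponentialPDFReal_mul_exp ht.ne]
        rw [integral_const_mul, integral_exponentialPDFReal hrt, mul_one]

end ExpMeasure

section Independence

variable {Ω ι : Type*} {mΩ : MeasurableSpace Ω} {P : Measure Ω}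

lemma measureReal_le_eq_integral_cdf_of_indepFun [IsProbabilityMeasure P] {X Y : Ω → ℝ}
    (hX : AEMeasurable X P) (hY : AEMeasurable Y P) (hXY : IndepFun X Y P) :
    P.real {ω | X ω ≤ Y ω} = ∫ ω, cdf (P.map X) (Y ω) ∂P := by
  have := Measure.isProbabilityMeasure_map hX
  have hle : MeasurableSet {q : ℝ × ℝ | q.1 ≤ q.2} :=
    measurableSet_le measurable_fst measurable_snd
  have hcdf : Measurable (cdf (P.map X)) := (monotone_cdf _).measurable
  rw [integral_eq_lintegral_of_nonneg_ae (.of_forall fun _ ↦ cdf_nonneg _ _)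
    (hcdf.comp_aemeasurable hY).aestronglyMeasurable, measureReal_def]
  congr 1
  calc P {ω | X ω ≤ Y ω}
      = P.map (fun ω ↦ (X ω, Y ω)) {q | q.1 ≤ q.2} :=
        (Measure.map_apply_of_aemeasurable (hX.prodMk hY) hle).symm
    _ = ∫⁻ y, P.map X (Set.Iic y) ∂P.map Y := by
        rw [hXY.map_prod_eq_prod_map_map hX hY, Measure.prod_apply_symm hle]; rfl
    _ = ∫⁻ ω, ENNReal.ofReal (cdf (P.map X) (Y ω)) ∂P := by
        simp only [← ofReal_cdf]
        exact lintegral_map' hcdf.ennreal_ofReal.aemeasurable hY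

lemma ae_pos_of_hasLaw_expMeasure {X : Ω → ℝ} {r : ℝ} (hr : 0 < r)
    (hX : HasLaw X (expMeasure r) P) : ∀ᵐ ω ∂P, 0 < X ω := by
  rw [hX.ae_iff (p := fun x ↦ 0 < x) (by fun_prop), ae_iff]
  simpa using! expMeasure_Iic_zero hr

lemma mgf_of_hasLaw_expMeasure {X : Ω → ℝ} {r : ℝ} (hr : 0 < r)
    (hX : HasLaw X (expMeasure r) P) {t : ℝ} (ht : t < r) : mgf X P t = r / (r - t) := by
  rw [← mgf_id_expMeasure hr ht, ← hX.map_eq, mgf_id_map hX.aemeasurable]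

lemma measureReal_le_eq_one_sub_mgf {X Y : Ω → ℝ} {r : ℝ} (hr : 0 < r)
    (hX : HasLaw X (expMeasure r) P) (hY : AEMeasurable Y P) (hXY : IndepFun X Y P)
    (hY0 : ∀ᵐ ω ∂P, 0 ≤ Y ω) : P.real {ω | X ω ≤ Y ω} = 1 - mgf Y P (-r) := by
  have := isProbabilityMeasure_expMeasure hr
  have := hX.isProbabilityMeasure
  have hint : Integrable (fun ω ↦ Real.exp (-r * Y ω)) P := by
    refine .of_bound (C := 1) (by fun_prop) ?_
    filter_upwards [hY0] with ω hω
    simpa using mul_nonneg hr.le hω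
  calc P.real {ω | X ω ≤ Y ω}
      = ∫ ω, cdf (expMeasure r) (Y ω) ∂P := by
        rw [measureReal_le_eq_integral_cdf_of_indepFun hX.aemeasurable hY hXY, hX.map_eq]
    _ = ∫ ω, (1 - Real.exp (-r * Y ω)) ∂P := by
        refine integral_congr_ae ?_
        filter_upwards [hY0] with ω hω
        rw [cdf_expMeasure_eq hr, if_pos hω, neg_mul]
    _ = 1 - mgf Y P (-r) := by
        rw [integral_sub (integrable_const _) hint, mgf]
        simp

section Inf

variable {α : Type*} [MeasurableSpace α] [SemilatticeInf α] [MeasurableInf₂ α]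

lemma aemeasurable_inf' {X : ι → Ω → α} {s : Finset ι} (hs : s.Nonempty)
    (hX : ∀ i ∈ s, AEMeasurable (X i) P) : AEMeasurable (s.inf' hs X) P :=
  Finset.inf'_induction hs X (p := (AEMeasurable · P)) (fun _ hf _ hg ↦ hf.inf hg) hX

lemma indepFun_inf' {X : ι → Ω → α} (hX : ∀ i, AEMeasurable (X i) P) (hindep : iIndepFun X P)
    {k : ι} {s : Finset ι} (hs : s.Nonempty) (hk : k ∉ s) : IndepFun (X k) (s.inf' hs X) P := by
  have hrestrict := hindep.indepFun_finset₀ {k} s (Finset.disjoint_singleton_left.2 hk) hX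
  have hinf : s.inf' hs X =
      s.attach.inf' hs.attach (fun j (x : s → α) ↦ x j) ∘ fun ω (j : s) ↦ X j ω := by
    ext ω
    refine eq_of_forall_le_iff fun a ↦ ?_
    simp [Finset.inf'_apply]
  rw [hinf]
  exact hrestrict.comp₀ (aemeasurable_pi_lambda _ fun i ↦ hX i)
    (aemeasurable_pi_lambda _ fun j ↦ hX j)
    (measurable_pi_apply (⟨k, Finset.mem_singleton_self k⟩ : ({k} : Finset ι))).aemeasurable
    (aemeasurable_inf' _ fun j _ ↦ (measurable_pi_apply j).aemeasurable)

end Inf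

lemma hasLaw_inf'_expMeasure {X : ι → Ω → ℝ} {r : ι → ℝ} {s : Finset ι} (hs : s.Nonempty)
    (hr : ∀ i ∈ s, 0 < r i) (hX : ∀ i ∈ s, HasLaw (X i) (expMeasure (r i)) P)
    (hindep : iIndepFun X P) : HasLaw (s.inf' hs X) (expMeasure (∑ i ∈ s, r i)) P where
  aemeasurable := aemeasurable_inf' hs fun i hi ↦ (hX i hi).aemeasurable
  map_eq := by
    have := hindep.isProbabilityMeasure
    have hmeas := aemeasurable_inf' hs fun i hi ↦ (hX i hi).aemeasurable
    have := Measure.isProbabilityMeasure_map hmeas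
    refine Measure.ext_of_Ici _ _ fun t ↦ ?_
    have hset : s.inf' hs X ⁻¹' Set.Ici t = ⋂ i ∈ s, X i ⁻¹' Set.Ici t := by
      ext; simp [Finset.inf'_apply]
    calc P.map (s.inf' hs X) (Set.Ici t)
        = ∏ i ∈ s, P (X i ⁻¹' Set.Ici t) := by
          rw [Measure.map_apply_of_aemeasurable hmeas measurableSet_Ici, hset,
            hindep.meas_biInter fun i _ ↦ ⟨_, measurableSet_Ici, rfl⟩]
      _ = ∏ i ∈ s, ENNReal.ofReal (Real.exp (-(r i * max t 0))) := by
          refine Finset.prod_congr rfl fun i hi ↦ ?_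
          rw [← expMeasure_Ici (hr i hi), ← (hX i hi).map_eq,
            Measure.map_apply_of_aemeasurable (hX i hi).aemeasurable measurableSet_Ici]
      _ = expMeasure (∑ i ∈ s, r i) (Set.Ici t) := by
          rw [expMeasure_Ici (Finset.sum_pos hr hs), Finset.sum_mul, ← Finset.sum_neg_distrib,
            Real.exp_sum, ENNReal.ofReal_prod_of_nonneg fun _ _ ↦ (Real.exp_pos _).le]

section Comparison

variable {X : ι → Ω → ℝ} {r : ι → ℝ} {k : ι} {s : Finset ι} {c : ℝ}

lemma measureReal_le_mul_inf' (hr : ∀ i, 0 < r i) (hX : ∀ i, HasLaw (X i) (expMeasure (r i)) P)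
    (hindep : iIndepFun X P) (hs : s.Nonempty) (hk : k ∉ s) (hc : 0 ≤ c) :
    P.real {ω | X k ω ≤ c * s.inf' hs X ω} = r k * c / (r k * c + ∑ i ∈ s, r i) := by
  have hmeas i := (hX i).aemeasurable
  have hsum := Finset.sum_pos (fun i _ ↦ hr i) hs
  have hkc : 0 ≤ r k * c := mul_nonneg (hr k).le hc
  have hmin := hasLaw_inf'_expMeasure hs (fun i _ ↦ hr i) (fun i _ ↦ hX i) hindep
  have hnonneg : ∀ᵐ ω ∂P, 0 ≤ c * s.inf' hs X ω := by
    filter_upwards [ae_pos_of_hasLaw_expMeasure hsum hmin] with ω hω using mul_nonneg hc hω.le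
  rw [measureReal_le_eq_one_sub_mgf (hr k) (hX k) (hmin.aemeasurable.const_mul c)
    ((indepFun_inf' hmeas hindep hs hk).comp measurable_id (measurable_const_mul c)) hnonneg,
    mgf_const_mul, mgf_of_hasLaw_expMeasure hsum hmin (by linarith)]
  have hden : 0 < r k * c + ∑ i ∈ s, r i := by positivity
  have hshift : ∑ i ∈ s, r i - c * -r k = r k * c + ∑ i ∈ s, r i := by ring
  rw [hshift, one_sub_div hden.ne', add_sub_cancel_right]

lemma measureReal_le_mul_sum (hr : ∀ i, 0 < r i) (hX : ∀ i, HasLaw (X i) (expMeasure (r i)) P)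
    (hindep : iIndepFun X P) (hk : k ∉ s) (hc : 0 ≤ c) :
    P.real {ω | X k ω ≤ c * ∑ i ∈ s, X i ω} = 1 - ∏ i ∈ s, r i / (r i + r k * c) := by
  have hmeas i := (hX i).aemeasurable
  have hkc : 0 ≤ r k * c := mul_nonneg (hr k).le hc
  have hnonneg : ∀ᵐ ω ∂P, 0 ≤ c * (∑ i ∈ s, X i) ω := by
    have hpos : ∀ᵐ ω ∂P, ∀ i ∈ s, 0 < X i ω :=
      (Finset.eventually_all s).2 fun i _ ↦ ae_pos_of_hasLaw_expMeasure (hr i) (hX i)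
    filter_upwards [hpos] with ω hω
    rw [Finset.sum_apply]
    exact mul_nonneg hc (Finset.sum_nonneg fun i hi ↦ (hω i hi).le)
  have hind := (hindep.indepFun_finsetSum_of_notMem₀ hmeas hk).symm.comp measurable_id
    (measurable_const_mul c)
  simp only [← Finset.sum_apply]
  rw [measureReal_le_eq_one_sub_mgf (hr k) (hX k)
    ((Finset.aemeasurable_sum s fun i _ ↦ hmeas i).const_mul c) hind hnonneg,
    mgf_const_mul, hindep.mgf_sum₀ hmeas]
  congr 1
  refine Finset.prod_congr rfl fun i _ ↦ ?_
  rw [mgf_of_hasLaw_expMeasure (hr i) (hX i) (by linarith [hr i])]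
  ring_nf

end Comparison

end Independence

section Algebra

lemma one_sub_one_sub_pow_succ {R : Type*} [Ring R] (p : R) (n : ℕ) :
    1 - (1 - p) ^ (n + 1) = p * (1 + ∑ i ∈ Finset.range n, (1 - p) ^ (i + 1)) := by
  rw [← mul_neg_geom_sum, Finset.sum_range_succ', sub_sub_cancel, pow_zero, add_comm]

variable {𝕜 : Type*} [Field 𝕜] [LinearOrder 𝕜] [IsStrictOrderedRing 𝕜]

lemma div_mul_le_iff_le_div_mul {a b : 𝕜} (ha : 0 < a) (hb : 0 < b) (x y : 𝕜) :
    a / b * x ≤ y ↔ x ≤ b / a * y := by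
  rw [← inv_div, inv_mul_le_iff₀ (div_pos hb ha)]

lemma div_sum_le_iff_le_mul_sum_erase {ι : Type*} [Fintype ι] [DecidableEq ι] {z : ι → 𝕜}
    (hz : ∀ j, 0 < z j) {p : 𝕜} (hp : p < 1) (k : ι) :
    z k / ∑ j, z j ≤ p ↔ z k ≤ p / (1 - p) * ∑ j ∈ Finset.univ.erase k, z j := by
  have hsum : 0 < ∑ j, z j := Finset.sum_pos (fun j _ ↦ hz j) ⟨k, Finset.mem_univ k⟩
  rw [div_le_iff₀ hsum, ← Finset.add_sum_erase _ _ (Finset.mem_univ k), div_mul_eq_mul_div,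
    le_div_iff₀ (sub_pos.2 hp)]
  constructor <;> intro h <;> linarith

end Algebra

section Simplex

variable {Ω ι : Type*} [MeasurableSpace Ω] {P : Measure Ω} [Fintype ι] {r p : ℝ}
  {Z : ι → Ω → ℝ}

lemma measureReal_div_sum_le (hr : 0 < r) (hlaw : ∀ j, HasLaw (Z j) (expMeasure r) P)
    (hindep : iIndepFun Z P) (k : ι) (hp : p ∈ Set.Ico (0 : ℝ) 1) :
    P.real {ω | Z k ω / ∑ j, Z j ω ≤ p} = 1 - (1 - p) ^ (Fintype.card ι - 1) := by
  classical
  have hq : 0 < 1 - p := sub_pos.2 hp.2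
  have hevent : {ω | Z k ω / ∑ j, Z j ω ≤ p} =ᵐ[P]
      {ω | Z k ω ≤ p / (1 - p) * ∑ j ∈ Finset.univ.erase k, Z j ω} := by
    rw [Filter.eventuallyEq_set]
    filter_upwards [ae_all_iff.2 fun j ↦ ae_pos_of_hasLaw_expMeasure hr (hlaw j)] with ω hω
    exact div_sum_le_iff_le_mul_sum_erase hω hp.2 k
  have hratio : r / (r + r * (p / (1 - p))) = 1 - p := by
    field_simp
    ring
  rw [measureReal_congr hevent, measureReal_le_mul_sum (fun _ ↦ hr) hlaw hindep
      (Finset.notMem_erase k _) (div_nonneg hp.1 hq.le),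
    Finset.prod_const, hratio, Finset.card_erase_of_mem (Finset.mem_univ k), Finset.card_univ]

variable [DecidableEq ι]

lemma measureReal_mul_le_inf'_erase (hr : 0 < r) (hlaw : ∀ j, HasLaw (Z j) (expMeasure r) P)
    (hindep : iIndepFun Z P) {k : ι} (hne : (Finset.univ.erase k).Nonempty)
    (hp : p ∈ Set.Ioo (0 : ℝ) 1) :
    P.real {ω | (1 - p) / p * Z k ω ≤ (Finset.univ.erase k).inf' hne (Z · ω)} =
      p / (1 + ((Fintype.card ι : ℝ) - 2) * (1 - p)) := by
  have hq : 0 < 1 - p := sub_pos.2 hp.2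
  have hcard : ((Finset.univ.erase k).card : ℝ) = Fintype.card ι - 1 := by
    rw [Finset.cast_card_erase_of_mem (Finset.mem_univ k), Finset.card_univ]
  have hrate := measureReal_le_mul_inf' (fun _ ↦ hr) hlaw hindep hne
    (Finset.notMem_erase k _) (div_nonneg hp.1.le hq.le)
  simp only [div_mul_le_iff_le_div_mul hq hp.1, ← Finset.inf'_apply]
  have hden : r * (p / (1 - p)) + ((Fintype.card ι : ℝ) - 1) * r =
      r / (1 - p) * (1 + ((Fintype.card ι : ℝ) - 2) * (1 - p)) := by
    field_simp
    ring
  rw [hrate, Finset.sum_const, nsmul_eq_mul, hcard, hden]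
  field_simp

lemma mul_le_inf'_inter_div_sum_le_ae_eq (hr : 0 < r)
    (hlaw : ∀ j, HasLaw (Z j) (expMeasure r) P) {k : ι} (hne : (Finset.univ.erase k).Nonempty)
    (hp : p ∈ Set.Ioo (0 : ℝ) 1) :
    ({ω | (1 - p) / p * Z k ω ≤ (Finset.univ.erase k).inf' hne (Z · ω)} ∩
        {ω | Z k ω / ∑ j, Z j ω ≤ p} : Set Ω) =ᵐ[P]
      {ω | (1 - p) / p * Z k ω ≤ (Finset.univ.erase k).inf' hne (Z · ω)} := by
  rw [Filter.eventuallyEq_set]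
  filter_upwards [ae_all_iff.2 fun j ↦ ae_pos_of_hasLaw_expMeasure hr (hlaw j)] with ω hω
  refine and_iff_left_of_imp fun hmin ↦ ?_
  have hinf : (Finset.univ.erase k).inf' hne (Z · ω) ≤ ∑ j ∈ Finset.univ.erase k, Z j ω := by
    obtain ⟨i, hi⟩ := id hne
    exact (Finset.inf'_le _ hi).trans (Finset.single_le_sum (fun j _ ↦ (hω j).le) hi)
  exact (div_sum_le_iff_le_mul_sum_erase hω hp.2 k).2
    ((div_mul_le_iff_le_div_mul (sub_pos.2 hp.2) hp.1 _ _).1 (hmin.trans hinf))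

end Simplex

theorem dirichlet_dsm_stmt12_general {Ω ι : Type*} [MeasurableSpace Ω] {P : Measure Ω}
    [Fintype ι] [DecidableEq ι] {r : ℝ} (hr : 0 < r) {Z : ι → Ω → ℝ}
    (hlaw : ∀ j, HasLaw (Z j) (expMeasure r) P) (hindep : iIndepFun Z P)
    (k : ι) (hne : (Finset.univ.erase k).Nonempty) {p : ℝ} (hp : p ∈ Set.Ioo (0 : ℝ) 1) :
    P ({ω | ((1 - p) / p) * Z k ω ≤ (Finset.univ.erase k).inf' hne (fun j ↦ Z j ω)} ∩
        {ω | Z k ω / ∑ j, Z j ω ≤ p}) / P {ω | Z k ω / ∑ j, Z j ω ≤ p} =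
      ENNReal.ofReal (1 / ((1 + ((Fintype.card ι : ℝ) - 2) * (1 - p)) *
        (1 + ∑ i ∈ Finset.range (Fintype.card ι - 2), (1 - p) ^ (i + 1)))) := by
  have := hindep.isProbabilityMeasure
  have hp0 : 0 < p := hp.1
  have hq : 0 < 1 - p := sub_pos.2 hp.2
  have hcard : Fintype.card ι - 1 = Fintype.card ι - 2 + 1 := by
    have := hne.card_pos
    simp only [Finset.card_erase_of_mem (Finset.mem_univ k), Finset.card_univ] at this
    omega
  rw [measure_congr (mul_le_inf'_inter_div_sum_le_ae_eq hr hlaw hne hp), ← ofReal_measureReal,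
    ← ofReal_measureReal, measureReal_mul_le_inf'_erase hr hlaw hindep hne hp,
    measureReal_div_sum_le hr hlaw hindep k ⟨hp0.le, hp.2⟩, hcard, one_sub_one_sub_pow_succ,
    ← ENNReal.ofReal_div_of_pos (by positivity)]
  congr 1
  field_simp

/-- Theorem 3, conditional mass of the vacuous focal element in the Simplex-DSM:
for `K ≥ 2`, i.i.d. `Exp(1)` variables `Z 0, …, Z (K−1)`, and `p ∈ (0,1)`,
`P(min_{j ≠ 0} Z j ≥ ((1−p)/p) Z 0 ∣ Z 0 / Σ Z ≤ p)
  = 1 / ((1 + (K−2)(1−p)) (1 + Σ_{i=1}^{K−2} (1−p)^i))`. -/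
theorem dirichlet_dsm_stmt12
    {Ω : Type*} [MeasurableSpace Ω] (P : Measure Ω) [IsProbabilityMeasure P]
    {K : ℕ} (hK : 2 ≤ K)
    (Z : Fin K → Ω → ℝ) (hZmeas : ∀ j, Measurable (Z j))
    (hindep : iIndepFun Z P)
    (hlaw : ∀ j, Measure.map (Z j) P = expMeasure 1)
    (k0 : Fin K) (hk0 : k0 = ⟨0, by omega⟩)
    (hne : (Finset.univ.erase k0).Nonempty) :
    ∀ p : ℝ, p ∈ Set.Ioo (0 : ℝ) 1 →
      P ({ω | ((1 - p) / p) * Z k0 ω ≤ (Finset.univ.erase k0).inf' hne (fun j => Z j ω)} ∩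
          {ω | Z k0 ω / ∑ j, Z j ω ≤ p}) / P {ω | Z k0 ω / ∑ j, Z j ω ≤ p} =
        ENNReal.ofReal (1 / ((1 + ((K : ℝ) - 2) * (1 - p)) *
          (1 + ∑ i ∈ Finset.range (K - 2), (1 - p) ^ (i + 1)))) := by
  intro p hp
  simpa using dirichlet_dsm_stmt12_general one_pos
    (fun j ↦ ⟨(hZmeas j).aemeasurable, hlaw j⟩) hindep k0 hne hp
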